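/- Let n ≥ 1 and let u₀ : ℝⁿ → ℝ be bounded and continuous. Then the function u(t,x) := ∫_{ℝⁿ} K(t,x,y) u₀(y) dy is well-defined for all t > 0 and x ∈ ℝⁿ, and satisfies the heat equation ∂u/∂t (t,x) = (1/2) Σ_{i=1}^n ∂²u/∂x_i² (t,x) on (0,∞) × ℝⁿ. That is, convolving the initial distribution with the fundamental solution yields a solution of the parabolic PDE. -/

import Mathlib

open Real MeasureTheory

/-- The heat kernel on `ℝⁿ`: `K(t,x,y) = (2πt)^(−n/2) · exp(−‖x−y‖²/(2t))`. -/
noncomputable def heatKernel (n : ℕ) (t : ℝ) (x y : EuclideanSpace ℝ (Fin n)) : ℝ :=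
  (2 * Real.pi * t) ^ (-(n : ℝ) / 2) * Real.exp (-‖x - y‖ ^ 2 / (2 * t))

/-! The kernel itself satisfies the heat equation: `∂ₜK` and the second derivative of `K` along a
direction `v` are `K` times `‖x - y‖² / (2t²) - n / (2t)` and `⟪x - y, v⟫² / t² - ‖v‖² / t`, and
summing the latter over an orthonormal basis gives twice the former. It remains to differentiate
under the integral sign. As long as `b < 1 / (2t)`, the Gaussian decay of `K(s, z, y)` beats
`exp (-b‖y‖²)` uniformly for `(s, z)` near `(t, x)`, even after multiplication by `1 + ‖z - y‖²`.
So `exp (-b‖y‖²) * ‖u₀ y‖` dominates all the integrands up to a constant, and for bounded data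
every `b > 0` is admissible. -/

open Filter Topology
open scoped RealInnerProductSpace

section WeightedIntegral

variable {α F : Type*} [MeasurableSpace α] {μ : Measure α} [NormedAddCommGroup F] [NormedSpace ℝ F]
  {w : α → ℝ} {u : α → F}

lemma integrable_smul_of_abs_le_mul (hu : AEStronglyMeasurable u μ)
    (hwu : Integrable (fun y => w y • u y) μ) {g : α → ℝ} (hg : AEStronglyMeasurable g μ) {C : ℝ}
    (hgw : ∀ y, |g y| ≤ C * |w y|) :
    Integrable (fun y => g y • u y) μ := by
  refine (hwu.norm.const_mul C).mono' (hg.smul hu) (Eventually.of_forall fun y => ?_)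
  rw [norm_smul, norm_smul, ← mul_assoc]
  exact mul_le_mul_of_nonneg_right (hgw y) (norm_nonneg _)

lemma hasDerivAt_integral_smul_of_abs_deriv_le_mul (hu : AEStronglyMeasurable u μ)
    (hwu : Integrable (fun y => w y • u y) μ) {g g' : ℝ → α → ℝ} {r₀ C : ℝ}
    (hg : ∀ r, AEStronglyMeasurable (g r) μ) (hg' : AEStronglyMeasurable (g' r₀) μ)
    (hint : Integrable (fun y => g r₀ y • u y) μ)
    (hderiv : ∀ᶠ r in 𝓝 r₀, ∀ y, HasDerivAt (g · y) (g' r y) r)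
    (hbound : ∀ᶠ r in 𝓝 r₀, ∀ y, |g' r y| ≤ C * |w y|) :
    HasDerivAt (fun r => ∫ y, g r y • u y ∂μ) (∫ y, g' r₀ y • u y ∂μ) r₀ := by
  refine (hasDerivAt_integral_of_dominated_loc_of_deriv_le
    (F := fun r y => g r y • u y) (F' := fun r y => g' r y • u y)
    (bound := fun y => C * ‖w y • u y‖) (hderiv.and hbound)
    (Eventually.of_forall fun r => (hg r).smul hu) hint (hg'.smul hu)
    (Eventually.of_forall fun y r hr => ?_) (hwu.norm.const_mul C)
    (Eventually.of_forall fun y r hr => (hr.1 y).smul_const (u y))).2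
  rw [norm_smul, norm_smul, ← mul_assoc]
  exact mul_le_mul_of_nonneg_right (hr.2 y) (norm_nonneg _)

end WeightedIntegral

section GaussianWeight

lemma one_add_le_mul_exp {δ w : ℝ} (hδ : 0 < δ) (hw : 0 ≤ w) :
    1 + w ≤ (1 + δ⁻¹) * exp (δ * w) :=
  calc 1 + w ≤ (1 + δ⁻¹) * (δ * w + 1) := by
        have : 0 ≤ δ * w + δ⁻¹ := by positivity
        linear_combination this - w * inv_mul_cancel₀ hδ.ne'
    _ ≤ (1 + δ⁻¹) * exp (δ * w) := by gcongr; exact add_one_le_exp _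

/- Since `‖y‖ ≤ ‖x - y‖ + R`, Young's inequality costs only an arbitrarily small part of the
Gaussian rate `a` when the centre moves from `x` to `0`; another small part absorbs the factor
`1 + ‖x - y‖ ^ 2`. -/
lemma exists_one_add_norm_sub_sq_mul_exp_le {E : Type*} [SeminormedAddCommGroup E] {a b : ℝ}
    (hb : 0 ≤ b) (hab : b < a) (R : ℝ) :
    ∃ C, ∀ x y : E, ‖x‖ ≤ R →
      (1 + ‖x - y‖ ^ 2) * exp (-a * ‖x - y‖ ^ 2) ≤ C * exp (-b * ‖y‖ ^ 2) := by
  obtain ⟨δ, hδ, rfl⟩ : ∃ δ > 0, a = b + 2 * δ := ⟨(a - b) / 2, by linarith, by ring⟩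
  refine ⟨(1 + δ⁻¹) * exp (b * R ^ 2 + b ^ 2 * R ^ 2 / δ), fun x y hx => ?_⟩
  set w := ‖x - y‖
  have hy : ‖y‖ ≤ w + R := by
    have := norm_sub_le x (x - y)
    rw [sub_sub_cancel] at this
    linarith
  have young : 2 * b * w * R ≤ δ * w ^ 2 + b ^ 2 * R ^ 2 / δ := by
    have : 0 ≤ (δ * w - b * R) ^ 2 / δ := by positivity
    have expand : (δ * w - b * R) ^ 2 / δ = δ * w ^ 2 - 2 * b * w * R + b ^ 2 * R ^ 2 / δ := by
      field_simp
      ring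
    linarith
  have exponent : δ * w ^ 2 + -(b + 2 * δ) * w ^ 2 ≤
      b * R ^ 2 + b ^ 2 * R ^ 2 / δ + -b * ‖y‖ ^ 2 := by
    have : b * ‖y‖ ^ 2 ≤ b * (w + R) ^ 2 := by gcongr
    linarith
  calc (1 + w ^ 2) * exp (-(b + 2 * δ) * w ^ 2)
      ≤ (1 + δ⁻¹) * exp (δ * w ^ 2) * exp (-(b + 2 * δ) * w ^ 2) := by
        gcongr
        exact one_add_le_mul_exp hδ (sq_nonneg w)
    _ = (1 + δ⁻¹) * exp (δ * w ^ 2 + -(b + 2 * δ) * w ^ 2) := by rw [exp_add, mul_assoc]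
    _ ≤ (1 + δ⁻¹) * exp (b * R ^ 2 + b ^ 2 * R ^ 2 / δ + -b * ‖y‖ ^ 2) := by gcongr
    _ = (1 + δ⁻¹) * exp (b * R ^ 2 + b ^ 2 * R ^ 2 / δ) * exp (-b * ‖y‖ ^ 2) := by
        rw [exp_add, mul_assoc]

lemma aestronglyMeasurable_of_integrable_exp_smul {E F : Type*} [SeminormedAddCommGroup E]
    [MeasurableSpace E] [OpensMeasurableSpace E] {μ : Measure E} [NormedAddCommGroup F]
    [NormedSpace ℝ F] {b : ℝ} {u : E → F}
    (hu : Integrable (fun y => exp (-b * ‖y‖ ^ 2) • u y) μ) :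
    AEStronglyMeasurable u μ := by
  have hw : Measurable fun y : E => exp (-b * ‖y‖ ^ 2) := by fun_prop
  exact (aestronglyMeasurable_smul_iff₀ hw.aestronglyMeasurable
    (Eventually.of_forall fun y => (exp_pos _).ne')).1 hu.aestronglyMeasurable

lemma integrable_exp_neg_mul_norm_sq_smul_of_bounded {V F : Type*} [NormedAddCommGroup V]
    [InnerProductSpace ℝ V] [FiniteDimensional ℝ V] [MeasurableSpace V] [BorelSpace V]
    [NormedAddCommGroup F] [NormedSpace ℝ F] {b : ℝ} (hb : 0 < b) {u : V → F}
    (hu : AEStronglyMeasurable u) {C : ℝ} (hC : ∀ y, ‖u y‖ ≤ C) :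
    Integrable fun y => exp (-b * ‖y‖ ^ 2) • u y := by
  have gaussian : Integrable fun y : V => exp (-b * ‖y‖ ^ 2) := by
    refine Integrable.of_integral_ne_zero ?_
    rw [GaussianFourier.integral_rexp_neg_mul_sq_norm hb]
    positivity
  exact gaussian.smul_bdd C hu (Eventually.of_forall hC)

end GaussianWeight

lemma hasDerivAt_add_smul_sub {E : Type*} [NormedAddCommGroup E] [NormedSpace ℝ E] (x v y : E)
    (r : ℝ) :
    HasDerivAt (fun r : ℝ => x + r • v - y) v r := by
  simpa using (((hasDerivAt_id r).smul_const v).const_add x).sub_const y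

section HeatKernel

variable {n : ℕ}

@[fun_prop]
lemma continuous_heatKernel (t : ℝ) (x : EuclideanSpace ℝ (Fin n)) :
    Continuous (heatKernel n t x) := by
  unfold heatKernel
  fun_prop

lemma hasDerivAt_heatKernel_time {t : ℝ} (ht : 0 < t) (x y : EuclideanSpace ℝ (Fin n)) :
    HasDerivAt (fun s => heatKernel n s x y)
      (heatKernel n t x y * (‖x - y‖ ^ 2 / (2 * t ^ 2) - n / (2 * t))) t := by
  have hbase : 0 < 2 * π * t := by positivity
  have hpow : HasDerivAt (fun s : ℝ => (2 * π * s) ^ (-(n : ℝ) / 2)) _ t :=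
    ((hasDerivAt_id t).const_mul (2 * π)).rpow_const (Or.inl hbase.ne')
  have hexp : HasDerivAt (fun s : ℝ => exp (-‖x - y‖ ^ 2 / (2 * s))) _ t :=
    ((hasDerivAt_const t (-‖x - y‖ ^ 2)).fun_div ((hasDerivAt_id t).const_mul 2)
      (by simpa using ht.ne')).exp
  refine (hpow.mul hexp).congr_deriv ?_
  simp only [id, heatKernel, rpow_sub_one hbase.ne']
  field_simp
  ring

lemma hasDerivAt_heatKernel_line {t : ℝ} (ht : t ≠ 0) (x v y : EuclideanSpace ℝ (Fin n)) (r : ℝ) :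
    HasDerivAt (fun r => heatKernel n t (x + r • v) y)
      (heatKernel n t (x + r • v) y * (-⟪x + r • v - y, v⟫ / t)) r := by
  have hnorm := (hasDerivAt_add_smul_sub x v y r).norm_sq
  refine ((hnorm.neg.div_const (2 * t)).exp.const_mul _).congr_deriv ?_
  simp only [heatKernel, Pi.neg_apply]
  field_simp

lemma hasDerivAt_heatKernel_line_mul_inner {t : ℝ} (ht : t ≠ 0) (x v y : EuclideanSpace ℝ (Fin n))
    (r : ℝ) :
    HasDerivAt (fun r => heatKernel n t (x + r • v) y * (-⟪x + r • v - y, v⟫ / t))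
      (heatKernel n t (x + r • v) y * (⟪x + r • v - y, v⟫ ^ 2 / t ^ 2 - ‖v‖ ^ 2 / t)) r := by
  have hinner : HasDerivAt (fun r : ℝ => -⟪x + r • v - y, v⟫ / t) (-‖v‖ ^ 2 / t) r := by
    simpa using ((hasDerivAt_add_smul_sub x v y r).inner ℝ (hasDerivAt_const r v)).neg.div_const t
  refine ((hasDerivAt_heatKernel_line ht x v y r).mul hinner).congr_deriv ?_
  field_simp
  ring

lemma exists_eventually_abs_heatKernel_mul_le {ι : Type*} {l : Filter ι} {τ A : ι → ℝ}
    {γ : ι → EuclideanSpace ℝ (Fin n)} {P : ι → EuclideanSpace ℝ (Fin n) → ℝ} {b t A₀ : ℝ}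
    {x : EuclideanSpace ℝ (Fin n)} (hb : 0 ≤ b) (ht : 0 < t) (hbt : 2 * b * t < 1)
    (hτ : Tendsto τ l (𝓝 t)) (hγ : Tendsto γ l (𝓝 x)) (hA : Tendsto A l (𝓝 A₀))
    (hP : ∀ᶠ s in l, ∀ y, |P s y| ≤ A s * (1 + ‖γ s - y‖ ^ 2)) :
    ∃ C, ∀ᶠ s in l, ∀ y, |heatKernel n (τ s) (γ s) y * P s y| ≤ C * |exp (-b * ‖y‖ ^ 2)| := by
  obtain ⟨a, hba, hat⟩ : ∃ a, b < a ∧ a < 1 / (2 * t) :=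
    exists_between (by rw [lt_div_iff₀ (by positivity)]; linarith)
  obtain ⟨C, hC⟩ := exists_one_add_norm_sub_sq_mul_exp_le
    (E := EuclideanSpace ℝ (Fin n)) hb hba (‖x‖ + 1)
  set c : ℝ → ℝ := fun s => (2 * π * s) ^ (-(n : ℝ) / 2)
  have hc : Tendsto (fun s => c (τ s) * A s) l (𝓝 (c t * A₀)) :=
    ((hτ.const_mul (2 * π)).rpow_const (Or.inl (by positivity))).mul hA
  have hrate : Tendsto (fun s => 1 / (2 * τ s)) l (𝓝 (1 / (2 * t))) :=
    tendsto_const_nhds.div (hτ.const_mul 2) (by positivity)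
  refine ⟨(c t * A₀ + 1) * C, ?_⟩
  filter_upwards [hP, hτ.eventually_const_lt ht, hc.eventually_lt_const (lt_add_one _),
    hrate.eventually_const_lt hat, hγ.norm.eventually_lt_const (lt_add_one _)]
    with s hPs hτs hcs has hγs y
  have hcτ : 0 ≤ c (τ s) := by positivity
  have hexp : exp (-‖γ s - y‖ ^ 2 / (2 * τ s)) ≤ exp (-a * ‖γ s - y‖ ^ 2) := by
    rw [exp_le_exp, neg_div, neg_mul, neg_le_neg_iff, div_eq_mul_one_div, mul_comm]
    gcongr
  have hcA : 0 ≤ c (τ s) * A s :=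
    mul_nonneg hcτ (nonneg_of_mul_nonneg_left ((abs_nonneg _).trans (hPs y)) (by positivity))
  calc |heatKernel n (τ s) (γ s) y * P s y|
      = c (τ s) * exp (-‖γ s - y‖ ^ 2 / (2 * τ s)) * |P s y| := by
        rw [heatKernel, abs_mul, abs_mul, abs_exp, abs_of_nonneg hcτ]
    _ ≤ c (τ s) * exp (-a * ‖γ s - y‖ ^ 2) * (A s * (1 + ‖γ s - y‖ ^ 2)) := by
        gcongr
        exact hPs y
    _ = c (τ s) * A s * ((1 + ‖γ s - y‖ ^ 2) * exp (-a * ‖γ s - y‖ ^ 2)) := by ring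
    _ ≤ (c t * A₀ + 1) * (C * exp (-b * ‖y‖ ^ 2)) :=
        mul_le_mul hcs.le (hC _ _ hγs.le) (by positivity) (hcA.trans hcs.le)
    _ = (c t * A₀ + 1) * C * |exp (-b * ‖y‖ ^ 2)| := by rw [abs_exp, mul_assoc]

end HeatKernel

section PolynomialBounds

lemma abs_sub_le_add_mul_one_add {p q a w : ℝ} (hp : 0 ≤ p) (hpa : p ≤ a * w) (hq : 0 ≤ q)
    (ha : 0 ≤ a) (hw : 0 ≤ w) :
    |p - q| ≤ (a + q) * (1 + w) :=
  calc |p - q| ≤ p + q := abs_sub_le_iff.2 ⟨by linarith, by linarith⟩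
    _ ≤ (a + q) * (1 + w) := by linear_combination hpa + ha + mul_nonneg hq hw

variable {E : Type*} [SeminormedAddCommGroup E] [InnerProductSpace ℝ E] {t : ℝ}

lemma abs_neg_inner_div_le (ht : 0 < t) (z v : E) :
    |-⟪z, v⟫ / t| ≤ ‖v‖ / t * (1 + ‖z‖ ^ 2) :=
  calc |-⟪z, v⟫ / t| = |⟪z, v⟫| / t := by rw [abs_div, abs_neg, abs_of_pos ht]
    _ ≤ ‖z‖ * ‖v‖ / t := by gcongr; exact abs_real_inner_le_norm z v
    _ = ‖v‖ / t * ‖z‖ := by ring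
    _ ≤ ‖v‖ / t * (1 + ‖z‖ ^ 2) := by gcongr; nlinarith [sq_nonneg (‖z‖ - 1)]

lemma abs_inner_sq_div_sub_le (ht : 0 < t) (z v : E) :
    |⟪z, v⟫ ^ 2 / t ^ 2 - ‖v‖ ^ 2 / t| ≤
      (‖v‖ ^ 2 / t ^ 2 + ‖v‖ ^ 2 / t) * (1 + ‖z‖ ^ 2) := by
  refine abs_sub_le_add_mul_one_add (by positivity) ?_ (by positivity) (by positivity)
    (by positivity)
  calc ⟪z, v⟫ ^ 2 / t ^ 2 ≤ (‖z‖ * ‖v‖) ^ 2 / t ^ 2 := by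
        gcongr ?_ / _
        exact sq_le_sq.2 ((abs_real_inner_le_norm z v).trans (le_abs_self _))
    _ = ‖v‖ ^ 2 / t ^ 2 * ‖z‖ ^ 2 := by ring

end PolynomialBounds

lemma half_sum_inner_sq_div_sub {ι E : Type*} [Fintype ι] [NormedAddCommGroup E]
    [InnerProductSpace ℝ E] (e : OrthonormalBasis ι ℝ E) (z : E) (t : ℝ) :
    1 / 2 * ∑ i, (⟪z, e i⟫ ^ 2 / t ^ 2 - ‖e i‖ ^ 2 / t) =
      ‖z‖ ^ 2 / (2 * t ^ 2) - Fintype.card ι / (2 * t) := by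
  simp only [Finset.sum_sub_distrib, ← Finset.sum_div, e.sum_sq_inner_left, e.norm_eq_one,
    one_pow, Finset.sum_const, Finset.card_univ, nsmul_eq_mul, mul_one]
  ring

section HeatIntegral

variable {n : ℕ} {F : Type*} [NormedAddCommGroup F] [NormedSpace ℝ F]
  {μ : Measure (EuclideanSpace ℝ (Fin n))} {u : EuclideanSpace ℝ (Fin n) → F} {b t : ℝ}

lemma integrable_heatKernel_mul_smul (hb : 0 ≤ b) (ht : 0 < t) (hbt : 2 * b * t < 1)
    (hu : Integrable (fun y => exp (-b * ‖y‖ ^ 2) • u y) μ) {x : EuclideanSpace ℝ (Fin n)}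
    {P : EuclideanSpace ℝ (Fin n) → ℝ} {A : ℝ} (hP : Continuous P)
    (hPA : ∀ y, |P y| ≤ A * (1 + ‖x - y‖ ^ 2)) :
    Integrable (fun y => (heatKernel n t x y * P y) • u y) μ := by
  obtain ⟨C, hC⟩ := exists_eventually_abs_heatKernel_mul_le (l := pure ()) (P := fun _ => P)
    hb ht hbt tendsto_const_nhds tendsto_const_nhds tendsto_const_nhds (eventually_pure.2 hPA)
  exact integrable_smul_of_abs_le_mul (aestronglyMeasurable_of_integrable_exp_smul hu) hu
    (Continuous.aestronglyMeasurable (by fun_prop)) (eventually_pure.1 hC)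

lemma integrable_heatKernel_smul (hb : 0 ≤ b) (ht : 0 < t) (hbt : 2 * b * t < 1)
    (hu : Integrable (fun y => exp (-b * ‖y‖ ^ 2) • u y) μ) (x : EuclideanSpace ℝ (Fin n)) :
    Integrable (fun y => heatKernel n t x y • u y) μ := by
  simpa only [mul_one] using integrable_heatKernel_mul_smul (x := x) (P := fun _ => 1) (A := 1)
    hb ht hbt hu continuous_const fun y => by simp

lemma hasDerivAt_integral_heatKernel_time (hb : 0 ≤ b) (ht : 0 < t) (hbt : 2 * b * t < 1)
    (hu : Integrable (fun y => exp (-b * ‖y‖ ^ 2) • u y) μ) (x : EuclideanSpace ℝ (Fin n)) :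
    HasDerivAt (fun s => ∫ y, heatKernel n s x y • u y ∂μ)
      (∫ y, (heatKernel n t x y * (‖x - y‖ ^ 2 / (2 * t ^ 2) - n / (2 * t))) • u y ∂μ) t := by
  have hpos : ∀ᶠ s : ℝ in 𝓝 t, 0 < s := eventually_gt_nhds ht
  have hcoeff : ContinuousAt (fun s : ℝ => 1 / (2 * s ^ 2) + n / (2 * s)) t := by
    fun_prop (disch := positivity)
  obtain ⟨C, hC⟩ := exists_eventually_abs_heatKernel_mul_le
    (P := fun s y => ‖x - y‖ ^ 2 / (2 * s ^ 2) - n / (2 * s))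
    hb ht hbt tendsto_id (tendsto_const_nhds (x := x)) hcoeff <| hpos.mono fun s hs y =>
      abs_sub_le_add_mul_one_add (by positivity) (by rw [one_div_mul_eq_div]) (by positivity)
        (by positivity) (by positivity)
  exact hasDerivAt_integral_smul_of_abs_deriv_le_mul
    (aestronglyMeasurable_of_integrable_exp_smul hu) hu
    (fun s => (continuous_heatKernel s x).aestronglyMeasurable)
    (Continuous.aestronglyMeasurable (by fun_prop))
    (integrable_heatKernel_smul hb ht hbt hu x)
    (hpos.mono fun s hs y => hasDerivAt_heatKernel_time hs x y) hC

lemma hasDerivAt_integral_heatKernel_line (hb : 0 ≤ b) (ht : 0 < t) (hbt : 2 * b * t < 1)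
    (hu : Integrable (fun y => exp (-b * ‖y‖ ^ 2) • u y) μ) (x v : EuclideanSpace ℝ (Fin n))
    (r : ℝ) :
    HasDerivAt (fun r => ∫ y, heatKernel n t (x + r • v) y • u y ∂μ)
      (∫ y, (heatKernel n t (x + r • v) y * (-⟪x + r • v - y, v⟫ / t)) • u y ∂μ) r := by
  have hline : Continuous fun r : ℝ => x + r • v := by fun_prop
  obtain ⟨C, hC⟩ := exists_eventually_abs_heatKernel_mul_le
    (P := fun r y => -⟪x + r • v - y, v⟫ / t)
    hb ht hbt tendsto_const_nhds (hline.tendsto r) tendsto_const_nhds <|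
      Eventually.of_forall fun r y => abs_neg_inner_div_le ht _ v
  exact hasDerivAt_integral_smul_of_abs_deriv_le_mul
    (aestronglyMeasurable_of_integrable_exp_smul hu) hu
    (fun r => (continuous_heatKernel t _).aestronglyMeasurable)
    (Continuous.aestronglyMeasurable (by fun_prop))
    (integrable_heatKernel_smul hb ht hbt hu _)
    (Eventually.of_forall fun r y => hasDerivAt_heatKernel_line ht.ne' x v y r) hC

lemma hasDerivAt_integral_heatKernel_line_mul_inner (hb : 0 ≤ b) (ht : 0 < t) (hbt : 2 * b * t < 1)
    (hu : Integrable (fun y => exp (-b * ‖y‖ ^ 2) • u y) μ) (x v : EuclideanSpace ℝ (Fin n))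
    (r : ℝ) :
    HasDerivAt (fun r => ∫ y, (heatKernel n t (x + r • v) y * (-⟪x + r • v - y, v⟫ / t)) • u y ∂μ)
      (∫ y, (heatKernel n t (x + r • v) y *
        (⟪x + r • v - y, v⟫ ^ 2 / t ^ 2 - ‖v‖ ^ 2 / t)) • u y ∂μ) r := by
  have hline : Continuous fun r : ℝ => x + r • v := by fun_prop
  obtain ⟨C, hC⟩ := exists_eventually_abs_heatKernel_mul_le
    (P := fun r y => ⟪x + r • v - y, v⟫ ^ 2 / t ^ 2 - ‖v‖ ^ 2 / t)
    hb ht hbt tendsto_const_nhds (hline.tendsto r) tendsto_const_nhds <|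
      Eventually.of_forall fun r y => abs_inner_sq_div_sub_le ht _ v
  exact hasDerivAt_integral_smul_of_abs_deriv_le_mul
    (aestronglyMeasurable_of_integrable_exp_smul hu) hu
    (fun r => Continuous.aestronglyMeasurable (by fun_prop))
    (Continuous.aestronglyMeasurable (by fun_prop))
    (integrable_heatKernel_mul_smul hb ht hbt hu (by fun_prop) fun y => abs_neg_inner_div_le ht _ v)
    (Eventually.of_forall fun r y => hasDerivAt_heatKernel_line_mul_inner ht.ne' x v y r) hC

lemma iteratedDeriv_two_integral_heatKernel_line (hb : 0 ≤ b) (ht : 0 < t) (hbt : 2 * b * t < 1)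
    (hu : Integrable (fun y => exp (-b * ‖y‖ ^ 2) • u y) μ) (x v : EuclideanSpace ℝ (Fin n)) :
    iteratedDeriv 2 (fun r : ℝ => ∫ y, heatKernel n t (x + r • v) y • u y ∂μ) 0 =
      ∫ y, (heatKernel n t x y * (⟪x - y, v⟫ ^ 2 / t ^ 2 - ‖v‖ ^ 2 / t)) • u y ∂μ := by
  rw [iteratedDeriv_succ, iteratedDeriv_one,
    funext fun r => (hasDerivAt_integral_heatKernel_line hb ht hbt hu x v r).deriv,
    (hasDerivAt_integral_heatKernel_line_mul_inner hb ht hbt hu x v 0).deriv]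
  simp only [zero_smul, add_zero]

end HeatIntegral

section Coordinates

variable {ι : Type*} [DecidableEq ι]

lemma toLp_update_eq_add_smul_single (x : EuclideanSpace ℝ ι) (i : ι) (r : ℝ) :
    WithLp.toLp 2 (Function.update x i r) = x + (r - x i) • EuclideanSpace.single i (1 : ℝ) := by
  ext j
  rcases eq_or_ne j i with rfl | hj
  · simp
  · simp [hj]

lemma iteratedDeriv_toLp_update {F : Type*} [NormedAddCommGroup F] [NormedSpace ℝ F] (k : ℕ)
    (f : EuclideanSpace ℝ ι → F) (x : EuclideanSpace ℝ ι) (i : ι) :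
    iteratedDeriv k (fun r => f (WithLp.toLp 2 (Function.update x i r))) (x i) =
      iteratedDeriv k (fun r : ℝ => f (x + r • EuclideanSpace.single i (1 : ℝ))) 0 := by
  simp only [toLp_update_eq_add_smul_single]
  have hshift := congrFun (iteratedDeriv_comp_sub_const k
    (fun r : ℝ => f (x + r • EuclideanSpace.single i (1 : ℝ))) (x i)) (x i)
  rwa [sub_self] at hshift

end Coordinates

theorem convolution_with_heatKernel_solves_heat_equation_general {n : ℕ} {F : Type*}
    [NormedAddCommGroup F] [NormedSpace ℝ F] {μ : Measure (EuclideanSpace ℝ (Fin n))}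
    {u₀ : EuclideanSpace ℝ (Fin n) → F} {b t : ℝ} (hb : 0 ≤ b) (ht : 0 < t) (hbt : 2 * b * t < 1)
    (hu₀ : Integrable (fun y => exp (-b * ‖y‖ ^ 2) • u₀ y) μ) (x : EuclideanSpace ℝ (Fin n)) :
    Integrable (fun y => heatKernel n t x y • u₀ y) μ ∧
      HasDerivAt (fun s => ∫ y, heatKernel n s x y • u₀ y ∂μ)
        ((1 / 2 : ℝ) • ∑ i : Fin n, iteratedDeriv 2 (fun r =>
          ∫ y, heatKernel n t (WithLp.toLp 2 (Function.update x i r)) y • u₀ y ∂μ) (x i)) t := by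
  refine ⟨integrable_heatKernel_smul hb ht hbt hu₀ x,
    (hasDerivAt_integral_heatKernel_time hb ht hbt hu₀ x).congr_deriv ?_⟩
  let e := EuclideanSpace.basisFun (Fin n) ℝ
  let Q (i : Fin n) (y : EuclideanSpace ℝ (Fin n)) : ℝ := ⟪x - y, e i⟫ ^ 2 / t ^ 2 - ‖e i‖ ^ 2 / t
  have hint (i : Fin n) : Integrable (fun y => (heatKernel n t x y * Q i y) • u₀ y) μ :=
    integrable_heatKernel_mul_smul hb ht hbt hu₀ (by fun_prop)
      fun y => abs_inner_sq_div_sub_le ht (x - y) (e i)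
  have hsecond (i : Fin n) : iteratedDeriv 2 (fun r => ∫ y, heatKernel n t
      (WithLp.toLp 2 (Function.update x i r)) y • u₀ y ∂μ) (x i) =
        ∫ y, (heatKernel n t x y * Q i y) • u₀ y ∂μ := by
    rw [iteratedDeriv_toLp_update 2 (fun z => ∫ y, heatKernel n t z y • u₀ y ∂μ),
      ← EuclideanSpace.basisFun_apply]
    exact iteratedDeriv_two_integral_heatKernel_line hb ht hbt hu₀ x (e i)
  have hlaplacian (y : EuclideanSpace ℝ (Fin n)) :
      ‖x - y‖ ^ 2 / (2 * t ^ 2) - n / (2 * t) = 1 / 2 * ∑ i, Q i y := by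
    rw [half_sum_inner_sq_div_sub e (x - y) t, Fintype.card_fin]
  simp only [hlaplacian, hsecond]
  rw [← integral_finsetSum _ fun i _ => hint i, ← integral_smul]
  congr 1 with y
  rw [← Finset.sum_smul, ← Finset.mul_sum, smul_smul, mul_left_comm]

/-- For bounded continuous initial data `u₀`, the convolution
`u(t,x) := ∫ K(t,x,y) u₀(y) dy` is well-defined for all `t > 0` (the integrand is
integrable) and satisfies the heat equation `∂u/∂t = (1/2) Σᵢ ∂²u/∂xᵢ²` on `(0,∞) × ℝⁿ`. -/
theorem convolution_with_heatKernel_solves_heat_equation (n : ℕ) (hn : 1 ≤ n)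
    (u₀ : EuclideanSpace ℝ (Fin n) → ℝ) (hcont : Continuous u₀)
    (hbdd : ∃ C : ℝ, ∀ y, |u₀ y| ≤ C) :
    (∀ t > (0 : ℝ), ∀ x : EuclideanSpace ℝ (Fin n),
        Integrable (fun y => heatKernel n t x y * u₀ y)) ∧
      ∀ t > (0 : ℝ), ∀ x : EuclideanSpace ℝ (Fin n),
        deriv (fun s => ∫ y, heatKernel n s x y * u₀ y) t =
          (1 / 2) * ∑ i : Fin n,
            iteratedDeriv 2
              (fun r => ∫ y, heatKernel n t (WithLp.toLp 2 (Function.update x i r)) y * u₀ y) (x i) := by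
  obtain ⟨C, hC⟩ := hbdd
  have solves {t : ℝ} (ht : 0 < t) := convolution_with_heatKernel_solves_heat_equation_general
    (b := 1 / (4 * t)) (by positivity) ht (by field_simp; norm_num)
    (integrable_exp_neg_mul_norm_sq_smul_of_bounded (by positivity) hcont.aestronglyMeasurable hC)
  exact ⟨fun t ht x => (solves ht x).1, fun t ht x => (solves ht x).2.deriv⟩
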